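/- Let (G, ξ) be a centered bivariate Gaussian vector with covariance matrix [[a, c], [c, b]], a, b > 0, |c| < √(ab), and M = G + ξ. Then the conditional covariance Cov(G, M | M > m) satisfies Cov(G, M | M > m) = (a+c)(a+b+2c)/m² + o(m⁻²) as m → ∞. -/

import Mathlib

open MeasureTheory ProbabilityTheory Filter Asymptotics Real

/-- Expectation of `X` conditioned on an event `s` (i.e. `E[X·1ₛ]/P(s)`). -/
noncomputable def condExpEvent {Ω : Type*} [MeasureSpace Ω] (X : Ω → ℝ) (s : Set Ω) : ℝ :=
  (∫ ω in s, X ω) / (ℙ s).toReal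

/-- Variance of `X` conditioned on an event `s`. -/
noncomputable def condVarEvent {Ω : Type*} [MeasureSpace Ω] (X : Ω → ℝ) (s : Set Ω) : ℝ :=
  condExpEvent (fun ω => X ω ^ 2) s - (condExpEvent X s) ^ 2

/-- Covariance of `X` and `Y` conditioned on an event `s`. -/
noncomputable def condCovEvent {Ω : Type*} [MeasureSpace Ω] (X Y : Ω → ℝ) (s : Set Ω) : ℝ :=
  condExpEvent (fun ω => X ω * Y ω) s - condExpEvent X s * condExpEvent Y s

/-!
For a jointly Gaussian pair `(X, Y)` the residual of the regression of `X` on `Y` is independent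
of `Y`, and it stays so after conditioning on the event `{Y > m}`. Hence
`Cov(X, Y | Y > m) = Cov(X, Y) / Var(Y) * Var(Y | Y > m)`. Writing `μ` and `v` for the mean and
variance of `Y`, the rescaled excess `(m - μ) (Y - m)` given `Y > m` has density proportional to
`exp (-y / v - y² / (2 v (m - μ)²))`, which converges to the exponential density of mean `v`; so
`m² Var(Y | Y > m)` tends to the variance `v²` of the exponential law.
-/

open scoped NNReal ENNReal Topology

lemma tendsto_div_sub_const_atTop (μ : ℝ) : Tendsto (fun m : ℝ => m / (m - μ)) atTop (𝓝 1) := by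
  have hinv : Tendsto (fun m : ℝ => 1 - μ / m) atTop (𝓝 1) := by
    simpa using (tendsto_id.const_div_atTop μ).const_sub 1
  have := hinv.inv₀ one_ne_zero
  rw [inv_one] at this
  refine this.congr' ?_
  filter_upwards [eventually_ne_atTop 0] with m hm
  rw [one_sub_div hm, inv_div]

lemma isLittleO_sub_div_pow_of_tendsto {f : ℝ → ℝ} {L : ℝ} {n : ℕ}
    (hf : Tendsto (fun x => x ^ n * f x) atTop (𝓝 L)) :
    (fun x => f x - L / x ^ n) =o[atTop] (fun x => x ^ (-(n : ℤ))) := by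
  have hne : ∀ᶠ x : ℝ in atTop, x ^ n ≠ 0 :=
    (eventually_ne_atTop 0).mono fun x hx => pow_ne_zero n hx
  refine isLittleO_of_tendsto' ?_ ?_
  · filter_upwards [hne] with x hx h
    simp [hx] at h
  · rw [← sub_self L]
    refine (hf.sub_const L).congr' ?_
    filter_upwards [hne] with x hx
    rw [zpow_neg, zpow_natCast]
    field_simp

section Conditioning

variable {Ω : Type*} {mΩ : MeasurableSpace Ω} {P : Measure Ω}

lemma memLp_cond {E : Type*} [NormedAddCommGroup E] {X : Ω → E} {p : ℝ≥0∞} (hX : MemLp X p P)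
    (s : Set Ω) : MemLp X p P[|s] := by
  by_cases hs : P s = 0
  · simp [cond_eq_zero_of_meas_eq_zero hs]
  · exact hX.restrict s |>.smul_measure (ENNReal.inv_ne_top.2 hs)

lemma integral_cond {E : Type*} [NormedAddCommGroup E] [NormedSpace ℝ E] (X : Ω → E) (s : Set Ω) :
    ∫ ω, X ω ∂P[|s] = (P.real s)⁻¹ • ∫ ω in s, X ω ∂P := by
  rw [ProbabilityTheory.cond, integral_smul_measure, ENNReal.toReal_inv, measureReal_def]

lemma cond_apply_of_nullMeasurableSet {s : Set Ω} (hs : NullMeasurableSet s P) (t : Set Ω) :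
    P[t | s] = (P s)⁻¹ * P (s ∩ t) := by
  rw [ProbabilityTheory.cond, Measure.smul_apply, Measure.restrict_apply₀' hs,
    Set.inter_comm, smul_eq_mul]

lemma indepFun_cond_preimage {α β : Type*} [MeasurableSpace α] [MeasurableSpace β]
    [IsFiniteMeasure P] {X : Ω → α} {Y : Ω → β} (hXY : X ⟂ᵢ[P] Y) (hY : AEMeasurable Y P)
    {B : Set β} (hB : MeasurableSet B) : X ⟂ᵢ[P[|Y ⁻¹' B]] Y := by
  rw [indepFun_iff_measure_inter_preimage_eq_mul] at hXY ⊢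
  intro s t hs ht
  simp only [cond_apply_of_nullMeasurableSet (hY.nullMeasurableSet_preimage hB)]
  rw [Set.inter_left_comm, ← Set.preimage_inter, hXY s _ hs (hB.inter ht),
    Set.inter_comm _ (X ⁻¹' s), hXY s B hs hB]
  by_cases hp : P (Y ⁻¹' B) = 0
  · have hBt : P (Y ⁻¹' (B ∩ t)) = 0 :=
      measure_mono_null (Set.preimage_mono Set.inter_subset_left) hp
    rw [hBt, hp, mul_zero, mul_zero, mul_zero]
  · calc (P (Y ⁻¹' B))⁻¹ * (P (X ⁻¹' s) * P (Y ⁻¹' (B ∩ t)))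
      _ = ((P (Y ⁻¹' B))⁻¹ * P (Y ⁻¹' B)) *
          ((P (Y ⁻¹' B))⁻¹ * (P (X ⁻¹' s) * P (Y ⁻¹' (B ∩ t)))) := by
        rw [ENNReal.inv_mul_cancel hp (measure_ne_top P _), one_mul]
      _ = (P (Y ⁻¹' B))⁻¹ * (P (X ⁻¹' s) * P (Y ⁻¹' B)) *
          ((P (Y ⁻¹' B))⁻¹ * P (Y ⁻¹' (B ∩ t))) := by ring

lemma map_cond_preimage {β : Type*} [MeasurableSpace β] {Y : Ω → β} (hY : AEMeasurable Y P)
    {B : Set β} (hB : MeasurableSet B) : P[|Y ⁻¹' B].map Y = (P.map Y)[|B] := by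
  rw [ProbabilityTheory.cond, ProbabilityTheory.cond, Measure.map_smul,
    Measure.restrict_map_of_aemeasurable hY hB, Measure.map_apply_of_aemeasurable hY hB]

lemma variance_cond_preimage {Y : Ω → ℝ} (hY : AEMeasurable Y P) {B : Set ℝ}
    (hB : MeasurableSet B) : Var[Y; P[|Y ⁻¹' B]] = Var[id; (P.map Y)[|B]] := by
  rw [← map_cond_preimage hY hB, variance_id_map (hY.mono_ac cond_absolutelyContinuous)]

end Conditioning

section CondCovEvent

variable {Ω : Type*} [MeasureSpace Ω]

lemma condExpEvent_eq_integral_cond (X : Ω → ℝ) (s : Set Ω) :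
    condExpEvent X s = ∫ ω, X ω ∂ℙ[|s] := by
  rw [condExpEvent, integral_cond, measureReal_def, smul_eq_mul, div_eq_inv_mul]

lemma condCovEvent_eq_covariance_cond [IsFiniteMeasure (ℙ : Measure Ω)] {X Y : Ω → ℝ}
    (hX : MemLp X 2) (hY : MemLp Y 2) (s : Set Ω) :
    condCovEvent X Y s = cov[X, Y; ℙ[|s]] := by
  simp only [condCovEvent, condExpEvent_eq_integral_cond]
  by_cases hs : ℙ s = 0
  · simp [cond_eq_zero_of_meas_eq_zero hs]
  · have := cond_isProbabilityMeasure hs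
    exact (covariance_eq_sub (memLp_cond hX s) (memLp_cond hY s)).symm

end CondCovEvent

section GaussianRegression

variable {Ω : Type*} {mΩ : MeasurableSpace Ω} {P : Measure Ω} {X Y : Ω → ℝ}

lemma hasGaussianLaw_prodMk_of_linear_combination
    (h : ∀ u v : ℝ, HasGaussianLaw (fun ω => u * X ω + v * Y ω) P) :
    HasGaussianLaw (fun ω => (X ω, Y ω)) P where
  isGaussian_map := by
    have hX : AEMeasurable X P := by simpa using (h 1 0).aemeasurable
    have hY : AEMeasurable Y P := by simpa using (h 0 1).aemeasurable
    refine isGaussian_of_isGaussian_map fun L => ?_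
    have hL : L ∘ (fun ω => (X ω, Y ω)) = fun ω => L (1, 0) * X ω + L (0, 1) * Y ω := by
      ext ω
      have hXY : (X ω, Y ω) = X ω • ((1 : ℝ), (0 : ℝ)) + Y ω • ((0 : ℝ), (1 : ℝ)) := by simp
      simp only [Function.comp_apply, hXY, map_add, map_smul, smul_eq_mul, mul_comm]
    rw [AEMeasurable.map_map_of_aemeasurable (by fun_prop) (hX.prodMk hY), hL]
    exact (h _ _).isGaussian_map

lemma indepFun_sub_regression (hXY : HasGaussianLaw (fun ω => (X ω, Y ω)) P)
    (hY : Var[Y; P] ≠ 0) : (X - (cov[X, Y; P] / Var[Y; P]) • Y) ⟂ᵢ[P] Y := by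
  have := hXY.isProbabilityMeasure
  set β := cov[X, Y; P] / Var[Y; P] with hβ
  have hgauss : HasGaussianLaw (fun ω => ((X - β • Y) ω, Y ω)) P :=
    hXY.map ((ContinuousLinearMap.fst ℝ ℝ ℝ - β • ContinuousLinearMap.snd ℝ ℝ ℝ).prod
      (ContinuousLinearMap.snd ℝ ℝ ℝ))
  refine hgauss.indepFun_of_covariance_eq_zero ?_
  rw [covariance_sub_left hXY.fst.memLp_two (hXY.snd.memLp_two.const_smul β) hXY.snd.memLp_two,
    covariance_smul_left, covariance_self hXY.snd.aemeasurable, hβ, div_mul_cancel₀ _ hY, sub_self]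

lemma covariance_cond_preimage_of_hasGaussianLaw
    (hXY : HasGaussianLaw (fun ω => (X ω, Y ω)) P) (hY : Var[Y; P] ≠ 0)
    {B : Set ℝ} (hB : MeasurableSet B) :
    cov[X, Y; P[|Y ⁻¹' B]] = cov[X, Y; P] / Var[Y; P] * Var[Y; P[|Y ⁻¹' B]] := by
  have := hXY.isProbabilityMeasure
  set β := cov[X, Y; P] / Var[Y; P]
  have hX2 : MemLp X 2 P[|Y ⁻¹' B] := memLp_cond hXY.fst.memLp_two _
  have hY2 : MemLp Y 2 P[|Y ⁻¹' B] := memLp_cond hXY.snd.memLp_two _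
  have hres : cov[X - β • Y, Y; P[|Y ⁻¹' B]] = 0 :=
    (indepFun_cond_preimage (indepFun_sub_regression hXY hY) hXY.snd.aemeasurable
      hB).covariance_eq_zero (hX2.sub (hY2.const_smul β)) hY2
  rwa [covariance_sub_left hX2 (hY2.const_smul β) hY2, covariance_smul_left,
    covariance_self hY2.aemeasurable, sub_eq_zero] at hres

end GaussianRegression

lemma condCovEvent_preimage_of_hasGaussianLaw {Ω : Type*} [MeasureSpace Ω] {X Y : Ω → ℝ}
    (hXY : HasGaussianLaw (fun ω => (X ω, Y ω)) ℙ) (hY : Var[Y] ≠ 0) {B : Set ℝ}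
    (hB : MeasurableSet B) :
    condCovEvent X Y (Y ⁻¹' B) =
      cov[X, Y] / Var[Y] * Var[id; (gaussianReal ℙ[Y] Var[Y].toNNReal)[|B]] := by
  have := hXY.isProbabilityMeasure
  rw [condCovEvent_eq_covariance_cond hXY.fst.memLp_two hXY.snd.memLp_two,
    ← hXY.snd.map_eq_gaussianReal, ← variance_cond_preimage hXY.snd.aemeasurable hB,
    covariance_cond_preimage_of_hasGaussianLaw hXY hY hB]

section GaussianTail

/-- The integral of `f` against the unnormalized density of the rescaled excess `t (Y - m)` of a
Gaussian variable `Y` of variance `v` over a level `m` lying at distance `t` above its mean. -/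
noncomputable def excessIntegral (v : ℝ≥0) (f : ℝ → ℝ) (t : ℝ) : ℝ :=
  ∫ y in Set.Ioi (0 : ℝ), f y * exp (-(y / v) - y ^ 2 / (2 * v * t ^ 2))

variable {v : ℝ≥0}

lemma tendsto_excessIntegral {f : ℝ → ℝ}
    (hf : IntegrableOn (fun y => f y * exp (-(y / v))) (Set.Ioi 0)) :
    Tendsto (excessIntegral v f) atTop (𝓝 (∫ y in Set.Ioi (0 : ℝ), f y * exp (-(y / v)))) := by
  have hfactor (t y : ℝ) : f y * exp (-(y / v) - y ^ 2 / (2 * v * t ^ 2)) =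
      f y * exp (-(y / v)) * exp (-(y ^ 2 / (2 * v * t ^ 2))) := by
    rw [sub_eq_add_neg, exp_add, ← mul_assoc]
  unfold excessIntegral
  simp only [hfactor]
  refine tendsto_integral_filter_of_dominated_convergence
    (fun y => ‖f y * exp (-(y / v))‖) ?_ ?_ hf.norm ?_
  · exact .of_forall fun t =>
      hf.aestronglyMeasurable.mul (Measurable.aestronglyMeasurable (by fun_prop))
  · refine .of_forall fun t => .of_forall fun y => ?_
    rw [norm_mul]
    refine mul_le_of_le_one_right (norm_nonneg _) ?_
    rw [norm_of_nonneg (exp_pos _).le, exp_le_one_iff, neg_nonpos]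
    positivity
  · refine .of_forall fun y => ?_
    have hquad : Tendsto (fun t : ℝ => y ^ 2 / (2 * v * t ^ 2)) atTop (𝓝 0) := by
      simp only [← div_div]
      exact (tendsto_pow_atTop two_ne_zero).const_div_atTop _
    simpa using (hquad.neg.rexp).const_mul (f y * exp (-(y / v)))

lemma setIntegral_Ioi_eq_integral_comp_add_div {E : Type*} [NormedAddCommGroup E]
    [NormedSpace ℝ E] (f : ℝ → E) (m : ℝ) {t : ℝ} (ht : 0 < t) :
    ∫ x in Set.Ioi m, f x = t⁻¹ • ∫ y in Set.Ioi (0 : ℝ), f (m + y / t) := by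
  have hscale := integral_comp_mul_left_Ioi (fun z => f (m + z)) 0 (inv_pos.2 ht)
  have hshift := (measurePreserving_add_left volume m).setIntegral_preimage_emb
    (measurableEmbedding_addLeft m) f (Set.Ioi m)
  simp only [mul_zero, inv_inv, ← div_eq_inv_mul] at hscale
  rw [hscale, inv_smul_smul₀ ht.ne', ← hshift]
  simp

lemma gaussianPDFReal_add_div (hv : v ≠ 0) {μ m : ℝ} (hm : m ≠ μ) (y : ℝ) :
    gaussianPDFReal μ v (m + y / (m - μ)) =
      gaussianPDFReal μ v m * exp (-(y / v) - y ^ 2 / (2 * v * (m - μ) ^ 2)) := by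
  have hv' : (v : ℝ) ≠ 0 := NNReal.coe_ne_zero.2 hv
  have ht : m - μ ≠ 0 := sub_ne_zero.2 hm
  rw [gaussianPDFReal, gaussianPDFReal, mul_assoc _ (exp _), ← exp_add]
  congr 2
  field_simp
  ring

lemma setIntegral_Ioi_gaussianReal (hv : v ≠ 0) {μ m : ℝ} (hm : μ < m) (f : ℝ → ℝ) :
    ∫ x in Set.Ioi m, f ((m - μ) * (x - m)) ∂gaussianReal μ v =
      gaussianPDFReal μ v m / (m - μ) * excessIntegral v f (m - μ) := by
  have ht : 0 < m - μ := sub_pos.2 hm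
  rw [gaussianReal_of_var_ne_zero _ hv, setIntegral_withDensity_eq_setIntegral_toReal_smul
    (measurable_gaussianPDF _ _) (.of_forall fun _ => gaussianPDF_lt_top) _ measurableSet_Ioi,
    setIntegral_Ioi_eq_integral_comp_add_div _ m ht, excessIntegral, div_eq_inv_mul, mul_assoc,
    ← integral_const_mul, smul_eq_mul]
  congr 2 with y
  rw [toReal_gaussianPDF, gaussianPDFReal_add_div hv hm.ne', add_sub_cancel_left,
    mul_div_cancel₀ _ ht.ne', smul_eq_mul]
  ring

lemma integral_cond_Ioi_gaussianReal (hv : v ≠ 0) {μ m : ℝ} (hm : μ < m) (f : ℝ → ℝ) :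
    ∫ x, f ((m - μ) * (x - m)) ∂(gaussianReal μ v)[|Set.Ioi m] =
      excessIntegral v f (m - μ) / excessIntegral v 1 (m - μ) := by
  have hmass : (gaussianReal μ v).real (Set.Ioi m) =
      gaussianPDFReal μ v m / (m - μ) * excessIntegral v 1 (m - μ) := by
    simpa using setIntegral_Ioi_gaussianReal hv hm 1
  have hpdf : gaussianPDFReal μ v m / (m - μ) ≠ 0 :=
    (div_pos (gaussianPDFReal_pos _ _ _ hv) (sub_pos.2 hm)).ne'
  rw [integral_cond, hmass, setIntegral_Ioi_gaussianReal hv hm, smul_eq_mul, ← div_eq_inv_mul,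
    mul_div_mul_left _ _ hpdf]

lemma integrableOn_pow_mul_exp_neg_div (hv : v ≠ 0) (k : ℕ) :
    IntegrableOn (fun y : ℝ => y ^ k * exp (-(y / v))) (Set.Ioi 0) := by
  have hv' : (0 : ℝ) < v := NNReal.coe_pos.2 hv.bot_lt
  simpa [div_eq_inv_mul] using integrableOn_rpow_mul_exp_neg_mul_rpow (p := 1) (s := k)
    (neg_one_lt_zero.trans_le k.cast_nonneg) one_pos (inv_pos.2 hv')

lemma integral_pow_mul_exp_neg_div (hv : v ≠ 0) (k : ℕ) :
    ∫ y in Set.Ioi (0 : ℝ), y ^ k * exp (-(y / v)) = k.factorial * (v : ℝ) ^ (k + 1) := by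
  have hv' : (0 : ℝ) < v := NNReal.coe_pos.2 hv.bot_lt
  have hGamma := integral_rpow_mul_exp_neg_mul_Ioi (a := k + 1) (r := (v : ℝ)⁻¹)
    (by positivity) (inv_pos.2 hv')
  simpa [div_eq_mul_inv, Gamma_nat_eq_factorial, ← rpow_natCast, mul_comm] using hGamma

lemma tendsto_moment_excess_gaussianReal (hv : v ≠ 0) (μ : ℝ) (k : ℕ) :
    Tendsto (fun m => ∫ x, ((m - μ) * (x - m)) ^ k ∂(gaussianReal μ v)[|Set.Ioi m]) atTop
      (𝓝 (k.factorial * (v : ℝ) ^ k)) := by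
  have hv' : (v : ℝ) ≠ 0 := NNReal.coe_ne_zero.2 hv
  have hnum := tendsto_excessIntegral (integrableOn_pow_mul_exp_neg_div hv k)
  have hden : Tendsto (excessIntegral v 1) atTop (𝓝 v) := by
    have hpow_zero : (1 : ℝ → ℝ) = fun y => y ^ 0 := by ext; simp
    rw [hpow_zero]
    simpa only [integral_pow_mul_exp_neg_div hv, Nat.factorial_zero, Nat.cast_one, one_mul,
      zero_add, pow_one] using tendsto_excessIntegral (integrableOn_pow_mul_exp_neg_div hv 0)
  have hquot := (hnum.div hden hv').comp (tendsto_atTop_add_const_right atTop (-μ) tendsto_id)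
  rw [integral_pow_mul_exp_neg_div hv, pow_succ, ← mul_assoc, mul_div_cancel_right₀ _ hv'] at hquot
  refine hquot.congr' ?_
  filter_upwards [eventually_gt_atTop μ] with m hm
  exact (integral_cond_Ioi_gaussianReal hv hm (· ^ k)).symm

lemma variance_excess_gaussianReal (hv : v ≠ 0) (μ m : ℝ) :
    (m - μ) ^ 2 * Var[id; (gaussianReal μ v)[|Set.Ioi m]] =
      (∫ x, ((m - μ) * (x - m)) ^ 2 ∂(gaussianReal μ v)[|Set.Ioi m]) -
        (∫ x, (m - μ) * (x - m) ∂(gaussianReal μ v)[|Set.Ioi m]) ^ 2 := by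
  have hpos : gaussianReal μ v (Set.Ioi m) ≠ 0 := fun h => by
    simpa using gaussianReal_absolutelyContinuous' μ hv h
  have := cond_isProbabilityMeasure hpos
  have hid : MemLp id 2 (gaussianReal μ v)[|Set.Ioi m] :=
    memLp_cond (memLp_id_gaussianReal 2) _
  have hexcess : MemLp (fun x => (m - μ) * (x - m)) 2 (gaussianReal μ v)[|Set.Ioi m] :=
    (hid.sub (memLp_const m)).const_mul (m - μ)
  calc (m - μ) ^ 2 * Var[id; (gaussianReal μ v)[|Set.Ioi m]]
    _ = Var[fun x => (m - μ) * (id x - m); (gaussianReal μ v)[|Set.Ioi m]] := by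
      rw [variance_const_mul, variance_sub_const hid.aestronglyMeasurable]
    _ = _ := variance_eq_sub hexcess

lemma tendsto_variance_excess_gaussianReal (hv : v ≠ 0) (μ : ℝ) :
    Tendsto (fun m => (m - μ) ^ 2 * Var[id; (gaussianReal μ v)[|Set.Ioi m]]) atTop
      (𝓝 ((v : ℝ) ^ 2)) := by
  have hfirst := tendsto_moment_excess_gaussianReal hv μ 1
  have hsecond := tendsto_moment_excess_gaussianReal hv μ 2
  simp only [variance_excess_gaussianReal hv]
  convert hsecond.sub (hfirst.pow 2) using 2
  · simp only [pow_one]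
  · rw [Nat.factorial_two, Nat.factorial_one, Nat.cast_one, Nat.cast_ofNat]
    ring

lemma tendsto_sq_mul_variance_cond_Ioi_gaussianReal (hv : v ≠ 0) (μ : ℝ) :
    Tendsto (fun m => m ^ 2 * Var[id; (gaussianReal μ v)[|Set.Ioi m]]) atTop
      (𝓝 ((v : ℝ) ^ 2)) := by
  have hlim := ((tendsto_div_sub_const_atTop μ).pow 2).mul
    (tendsto_variance_excess_gaussianReal hv μ)
  rw [one_pow, one_mul] at hlim
  refine hlim.congr' ?_
  filter_upwards [eventually_gt_atTop μ] with m hm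
  rw [← mul_assoc, ← mul_pow, div_mul_cancel₀ _ (sub_pos.2 hm).ne']

end GaussianTail

section LinearCombination

variable {Ω : Type*} {mΩ : MeasurableSpace Ω} {P : Measure Ω} {X Y : Ω → ℝ} {a b c : ℝ}

lemma covariance_self_add_of_variance_linear_combination [IsFiniteMeasure P]
    (hX : MemLp X 2 P) (hY : MemLp Y 2 P)
    (hvar : ∀ u v : ℝ,
      Var[fun ω => u * X ω + v * Y ω; P] = u ^ 2 * a + 2 * u * v * c + v ^ 2 * b) :
    cov[X, X + Y; P] = a + c := by
  have hvarX : Var[X; P] = a := by simpa using hvar 1 0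
  have hvarY : Var[Y; P] = b := by simpa using hvar 0 1
  have hvarXY : Var[X + Y; P] = a + 2 * c + b := by simpa [Pi.add_def] using hvar 1 1
  rw [variance_add hX hY, hvarX, hvarY] at hvarXY
  rw [covariance_add_right hX hX hY, covariance_self hX.aemeasurable, hvarX]
  linarith

lemma hasGaussianLaw_prodMk_self_add (hXY : HasGaussianLaw (fun ω => (X ω, Y ω)) P) :
    HasGaussianLaw (fun ω => (X ω, X ω + Y ω)) P :=
  hXY.map ((ContinuousLinearMap.fst ℝ ℝ ℝ).prod
    (ContinuousLinearMap.fst ℝ ℝ ℝ + ContinuousLinearMap.snd ℝ ℝ ℝ))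

lemma sq_mul_add_two_mul_add_sq_mul_nonneg (ha : 0 ≤ a) (hb : 0 ≤ b) (hc : |c| ≤ √(a * b))
    (u v : ℝ) : 0 ≤ u ^ 2 * a + 2 * u * v * c + v ^ 2 * b := by
  have hsquare : 0 ≤ (|u| * √a - |v| * √b) ^ 2 := sq_nonneg _
  have hcross : |u * v * c| ≤ |u| * |v| * (√a * √b) := by
    rw [abs_mul, abs_mul, ← sqrt_mul ha]
    gcongr
  rw [sub_sq, mul_pow, mul_pow, sq_abs, sq_abs, sq_sqrt ha, sq_sqrt hb] at hsquare
  linarith [neg_abs_le (u * v * c)]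

lemma add_add_two_mul_pos_of_abs_lt_sqrt (hab : 0 ≤ a + b) (hc : |c| < √(a * b)) :
    0 < a + b + 2 * c := by
  have hamgm : √(a * b) ≤ (a + b) / 2 :=
    sqrt_le_iff.2 ⟨by linarith, by nlinarith [sq_nonneg (a - b)]⟩
  linarith [neg_abs_le c]

end LinearCombination

theorem gaussian_condCov_goal_proxy_general {Ω : Type*} [MeasureSpace Ω] {X Y : Ω → ℝ}
    (hXY : HasGaussianLaw (fun ω => (X ω, Y ω)) ℙ) (hY : Var[Y] ≠ 0) :
    (fun m : ℝ => condCovEvent X Y {ω | m < Y ω} - cov[X, Y] * Var[Y] / m ^ 2)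
      =o[atTop] (fun m : ℝ => m ^ (-(2 : ℤ))) := by
  have hvar_pos : 0 < Var[Y] := (variance_nonneg Y ℙ).lt_of_ne' hY
  have hlim := (tendsto_sq_mul_variance_cond_Ioi_gaussianReal (toNNReal_pos.2 hvar_pos).ne'
    ℙ[Y]).const_mul (cov[X, Y] / Var[Y])
  rw [coe_toNNReal _ hvar_pos.le, sq Var[Y], ← mul_assoc, div_mul_cancel₀ _ hY] at hlim
  refine isLittleO_sub_div_pow_of_tendsto (n := 2) (hlim.congr fun m => ?_)
  rw [mul_left_comm]
  exact congrArg _ (condCovEvent_preimage_of_hasGaussianLaw hXY hY measurableSet_Ioi).symm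

/-- Conditional covariance of the goal with the proxy:
`Cov(G, M | M > m) = (a+c)(a+b+2c)/m² + o(m⁻²)` as `m → ∞`. -/
theorem gaussian_condCov_goal_proxy {Ω : Type*} [MeasureSpace Ω] [IsProbabilityMeasure (ℙ : Measure Ω)]
    (G ξ : Ω → ℝ) (hG : Measurable G) (hξ : Measurable ξ)
    (a b c : ℝ) (ha : 0 < a) (hb : 0 < b) (hc : |c| < Real.sqrt (a * b))
    (hlaw : ∀ u v : ℝ, Measure.map (fun ω => u * G ω + v * ξ ω) ℙ =
      gaussianReal 0 (Real.toNNReal (u ^ 2 * a + 2 * u * v * c + v ^ 2 * b))) :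
    (fun m : ℝ => condCovEvent G (fun ω => G ω + ξ ω) {ω | m < G ω + ξ ω} -
        (a + c) * (a + b + 2 * c) / m ^ 2)
      =o[atTop] (fun m : ℝ => m ^ (-(2 : ℤ))) := by
  have hlin (u v : ℝ) : HasLaw (fun ω => u * G ω + v * ξ ω)
      (gaussianReal 0 (u ^ 2 * a + 2 * u * v * c + v ^ 2 * b).toNNReal) ℙ := ⟨by fun_prop, hlaw u v⟩
  have hgauss : HasGaussianLaw (fun ω => (G ω, ξ ω)) ℙ :=
    hasGaussianLaw_prodMk_of_linear_combination fun u v => (hlin u v).hasGaussianLaw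
  have hvar (u v : ℝ) : Var[fun ω => u * G ω + v * ξ ω] =
      u ^ 2 * a + 2 * u * v * c + v ^ 2 * b := by
    rw [(hlin u v).variance_eq, variance_id_gaussianReal,
      coe_toNNReal _ (sq_mul_add_two_mul_add_sq_mul_nonneg ha.le hb.le hc.le u v)]
  have hvarM : Var[fun ω => G ω + ξ ω] = a + b + 2 * c := by
    simpa [add_right_comm] using hvar 1 1
  have hcov : cov[G, fun ω => G ω + ξ ω] = a + c :=
    covariance_self_add_of_variance_linear_combination hgauss.fst.memLp_two hgauss.snd.memLp_two
      hvar
  have hpos : 0 < a + b + 2 * c := add_add_two_mul_pos_of_abs_lt_sqrt (by positivity) hc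
  rw [← hcov, ← hvarM]
  exact gaussian_condCov_goal_proxy_general (hasGaussianLaw_prodMk_self_add hgauss)
    (hvarM ▸ hpos.ne')
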